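/- Let n, m ≥ 1 be integers and let Ω = Ω₀×Ω₂ ⊂ 𝕋^n×𝕋^m with Ω₀ ⊂ 𝕋^n and Ω₂ ⊂ 𝕋^m nonempty and open. There exists a constant C > 0, independent of α and λ, such that for every α ∈ [0,1)^n, every λ ∈ ℝ, and all u, f ∈ L²(𝕋^n×𝕋^m) with u in the domain of H_α and (H_α − λ)u = f: ‖u‖_{L²(𝕋^n×𝕋^m)} ≤ C(‖f‖_{L²(𝕋^n×𝕋^m)} + ‖u‖_{L²(Ω)}). -/

import Mathlib

open MeasureTheory Complex Filter ENNReal NNReal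

noncomputable section

instance fact_two_pi_pos : Fact (0 < 2 * Real.pi) := ⟨by positivity⟩

/-- The waveguide manifold `ℝ^n × 𝕋^m`, where `𝕋 = ℝ/2πℤ`. -/
abbrev Wave (n m : ℕ) : Type :=
  EuclideanSpace ℝ (Fin n) × (Fin m → AddCircle (2 * Real.pi))

/-- The frequency space `ℝ^n × ℤ^m`. -/
abbrev Freq (n m : ℕ) : Type := EuclideanSpace ℝ (Fin n) × (Fin m → ℤ)

/-- The measure on frequency space: Lebesgue × counting. -/
noncomputable def freqMeasure (n m : ℕ) : Measure (Freq n m) :=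
  (volume : Measure (EuclideanSpace ℝ (Fin n))).prod Measure.count

/-- `|ξ|²` for a frequency `ξ ∈ ℝ^n × ℤ^m`. -/
def freqNormSq {n m : ℕ} (ξ : Freq n m) : ℝ :=
  ‖ξ.1‖ ^ 2 + ∑ i, ((ξ.2 i : ℝ)) ^ 2

/-- The character `e^{i z·ξ}` on `ℝ^n × 𝕋^m`. -/
noncomputable def waveChar {n m : ℕ} (ξ : Freq n m) (z : Wave n m) : ℂ :=
  Complex.exp (Complex.I * ((inner ℝ z.1 ξ.1 : ℝ) : ℂ)) * ∏ i, fourier (ξ.2 i) (z.2 i)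

/-- The Fourier transform on `ℝ^n × 𝕋^m`, with frequencies `ξ ∈ ℝ^n × ℤ^m`. -/
noncomputable def waveFT {n m : ℕ} (f : Wave n m → ℂ) (ξ : Freq n m) : ℂ :=
  ∫ z : Wave n m, f z * (starRingEnd ℂ) (waveChar ξ z)

/-- Squared `L²` norm of `f` over a set `A`. -/
noncomputable def L2sq {X : Type*} [MeasureSpace X] (A : Set X) (f : X → ℂ) : ℝ≥0∞ :=
  ∫⁻ z in A, (‖f z‖₊ : ℝ≥0∞) ^ 2

/-- Squared Sobolev `H^s` norm, `‖⟨ξ⟩^s F f‖_{L²}²`. -/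
noncomputable def sobSq {n m : ℕ} (s : ℝ) (f : Wave n m → ℂ) : ℝ≥0∞ :=
  ∫⁻ ξ, ENNReal.ofReal ((1 + freqNormSq ξ) ^ s) * (‖waveFT f ξ‖₊ : ℝ≥0∞) ^ 2
    ∂(freqMeasure n m)

/-- Membership in `H^s(ℝ^n × 𝕋^m)`. -/
def MemHs {n m : ℕ} (s : ℝ) (f : Wave n m → ℂ) : Prop :=
  MemLp f 2 (volume : Measure (Wave n m)) ∧ sobSq s f < ⊤

/-- Condition (G): `Ω₁ ⊂ ℝ^n` is nonempty, open and `2πℤ^n`-invariant; `Ω₂ ⊂ 𝕋^m` is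
nonempty and open. -/
structure CondG (n m : ℕ) (Ω₁ : Set (EuclideanSpace ℝ (Fin n)))
    (Ω₂ : Set (Fin m → AddCircle (2 * Real.pi))) : Prop where
  nonempty₁ : Ω₁.Nonempty
  open₁ : IsOpen Ω₁
  invariant₁ : ∀ (k : Fin n → ℤ) (x : EuclideanSpace ℝ (Fin n)), x ∈ Ω₁ →
    x + (WithLp.equiv 2 (Fin n → ℝ)).symm (fun i => 2 * Real.pi * (k i : ℝ)) ∈ Ω₁
  nonempty₂ : Ω₂.Nonempty
  open₂ : IsOpen Ω₂

/-- `U` is the Schrödinger group `e^{itΔ}` on `ℝ^n × 𝕋^m`: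
`F (U t f)(ξ) = e^{-it|ξ|²} (F f)(ξ)`. -/
def IsSchrodingerGroup {n m : ℕ} (U : ℝ → (Wave n m → ℂ) → (Wave n m → ℂ)) : Prop :=
  ∀ (t : ℝ) (f : Wave n m → ℂ) (ξ : Freq n m),
    waveFT (U t f) ξ = Complex.exp (-(Complex.I * (t : ℂ) * (freqNormSq ξ : ℂ))) * waveFT f ξ

/-- `J` is the operator `(1-Δ)^{-s}`, i.e. the Fourier multiplier `⟨ξ⟩^{-2s}`. -/
def IsBesselOp {n m : ℕ} (s : ℝ) (J : (Wave n m → ℂ) → (Wave n m → ℂ)) : Prop :=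
  ∀ (f : Wave n m → ℂ) (ξ : Freq n m),
    waveFT (J f) ξ = Complex.ofReal ((1 + freqNormSq ξ) ^ (-s)) * waveFT f ξ

/-- Continuity of `t ↦ f t` from `I` into `H^s(ℝ^n × 𝕋^m)`. -/
def ContHs {n m : ℕ} (s : ℝ) (I : Set ℝ) (f : ℝ → Wave n m → ℂ) : Prop :=
  ∀ t₀ ∈ I, Filter.Tendsto (fun t => sobSq s (fun z => f t z - f t₀ z))
    (nhdsWithin t₀ I) (nhds 0)

/-- Space-time Fourier transform of `u : ℝ_t × (ℝ^n × 𝕋^m) → ℂ`. -/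
noncomputable def stFT {n m : ℕ} (u : ℝ → Wave n m → ℂ) (ξ : Freq n m) (τ : ℝ) : ℂ :=
  ∫ t : ℝ, Complex.exp (-(Complex.I * (τ : ℂ) * (t : ℂ))) * waveFT (u t) ξ

/-- Squared Bourgain norm `‖u‖_{X^{s,b}}² = ‖⟨τ-|ξ|²⟩^b ⟨ξ⟩^s ũ‖_{L²}²`. -/
noncomputable def XNormSq {n m : ℕ} (s b : ℝ) (u : ℝ → Wave n m → ℂ) : ℝ≥0∞ :=
  ∫⁻ p : Freq n m × ℝ,
    ENNReal.ofReal ((1 + (p.2 - freqNormSq p.1) ^ 2) ^ b * (1 + freqNormSq p.1) ^ s)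
      * (‖stFT u p.1 p.2‖₊ : ℝ≥0∞) ^ 2 ∂((freqMeasure n m).prod volume)

/-- Bourgain norm `‖u‖_{X^{s,b}}`. -/
noncomputable def XNorm {n m : ℕ} (s b : ℝ) (u : ℝ → Wave n m → ℂ) : ℝ≥0∞ :=
  XNormSq s b u ^ (1/2 : ℝ)

/-- Restriction Bourgain norm `‖u‖_{X^{s,b}_I}`, an infimum over all extensions. -/
noncomputable def XNormOn {n m : ℕ} (s b : ℝ) (I : Set ℝ) (u : ℝ → Wave n m → ℂ) : ℝ≥0∞ :=
  ⨅ v : {v : ℝ → Wave n m → ℂ // ∀ t ∈ I, v t = u t}, XNorm s b v.1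

/-- The torus `𝕋^n = (ℝ/2πℤ)^n`. -/
abbrev Torus (n : ℕ) : Type := Fin n → AddCircle (2 * Real.pi)

/-- Fourier coefficients on `𝕋^n × 𝕋^m`. -/
noncomputable def torFT {n m : ℕ} (u : Torus n × Torus m → ℂ)
    (k : Fin n → ℤ) (l : Fin m → ℤ) : ℂ :=
  ∫ z : Torus n × Torus m,
    u z * (starRingEnd ℂ) ((∏ i, fourier (k i) (z.1 i)) * ∏ j, fourier (l j) (z.2 j))

/-- The symbol `|k-α|² + |l|²` of the partially twisted Laplacian `-H_α`. -/
def twSymb {n m : ℕ} (α : Fin n → ℝ) (k : Fin n → ℤ) (l : Fin m → ℤ) : ℝ :=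
  (∑ i, ((k i : ℝ) - α i) ^ 2) + ∑ j, ((l j : ℝ)) ^ 2

/-- `U` is the unitary group `e^{itH_α}` generated by the partially twisted Laplacian:
it multiplies the `(k,l)` Fourier coefficient by `e^{-it(|k-α|²+|l|²)}`. -/
def IsTwistedGroup {n m : ℕ} (α : Fin n → ℝ)
    (U : ℝ → (Torus n × Torus m → ℂ) → (Torus n × Torus m → ℂ)) : Prop :=
  ∀ (t : ℝ) (u : Torus n × Torus m → ℂ) (k : Fin n → ℤ) (l : Fin m → ℤ),
    torFT (U t u) k l = Complex.exp (-(Complex.I * (t : ℂ) * (twSymb α k l : ℂ))) * torFT u k l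

/-- The unit cube `[0,1)^n`. -/
def cube01 (n : ℕ) : Set (Fin n → ℝ) := Set.univ.pi fun _ => Set.Ico (0 : ℝ) 1

/-- The fundamental cube `[0,2π)^n` of the torus. -/
def torCube (n : ℕ) : Set (Fin n → ℝ) := Set.univ.pi fun _ => Set.Ico (0 : ℝ) (2 * Real.pi)

/-- The partial Floquet–Bloch transform
`(Π_α g)(x,y) = e^{ix·α} Σ_{k ∈ ℤ^n} e^{2πiα·k} g(x + 2kπ, y)`,
written on representatives `x ∈ ℝ^n`. -/
noncomputable def floq {n m : ℕ} (α : Fin n → ℝ) (g : Wave n m → ℂ)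
    (x : Fin n → ℝ) (y : Fin m → AddCircle (2 * Real.pi)) : ℂ :=
  Complex.exp (Complex.I * ((∑ i, x i * α i : ℝ) : ℂ)) *
    ∑' k : Fin n → ℤ,
      Complex.exp (2 * Real.pi * Complex.I * ((∑ i, α i * (k i : ℝ) : ℝ) : ℂ)) *
        g ((WithLp.equiv 2 (Fin n → ℝ)).symm (fun i => x i + 2 * (k i : ℝ) * Real.pi), y)

end

/-!
Write `N` for the frequencies at which the symbol `-|k - α|² - |l|² - λ` has modulus at most `1`.
Off `N` the coefficients of `u` are dominated by those of `f`, so everything reduces to a lower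
bound `‖P‖_{L²(Ω)} ≥ c ‖P‖` for trigonometric polynomials `P` with frequencies in `N`, where `c`
depends on `Ω` only. The set `N` consists of the lattice points in a spherical shell
`| |x - z|² - μ | ≤ 1`, and `c` must not depend on `z` and `μ`.

The bound is proved by induction on the dimension of the affine span of the frequency set. Let `h`
be a nonzero cutoff supported in `Ω`, and `p` a trigonometric polynomial close to `h` in the sup
norm; let `r` bound the distances between the frequencies of `p`. Split the frequency set into
classes connected by steps of length at most `r`. The products of `p` with the parts of `P`
supported on distinct classes are orthogonal, so if all classes have an affine span of smaller
dimension, the inductive bound passes from the classes to `P`. Suppose instead that some class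
spans the same affine space as the whole set. By the curvature of the shell the diameter of a class
is bounded, and then so is that of the whole set, uniformly in `z` and `μ`. Hence, up to
multiplication by a character, `P` ranges over a fixed finite-dimensional space. On that space
`P ↦ h P` is injective, because a nonzero trigonometric polynomial does not vanish on an open set.
-/

section ChainConnected

variable {X : Type*} [PseudoMetricSpace X]

/-- The nonempty finite sets that can be built up from one point by successively adding points at
distance at most `r` from a point already present, i.e. the finite sets in which any two points are
joined by a chain of steps of length at most `r`. -/
inductive ChainConnected (r : ℝ) : Set X → Prop
  | singleton (x : X) : ChainConnected r {x}
  | insert_of_dist_le {T : Set X} {x y : X} (hT : ChainConnected r T) (hx : x ∈ T)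
      (hxy : dist y x ≤ r) : ChainConnected r (insert y T)

lemma ChainConnected.nonempty {r : ℝ} {T : Set X} (hT : ChainConnected r T) : T.Nonempty := by
  cases hT with
  | singleton x => exact Set.singleton_nonempty x
  | insert_of_dist_le => exact Set.insert_nonempty _ _

lemma exists_chainConnected_component {K : Type*} (r : ℝ) (φ : K → X) {S : Finset K}
    (hS : S.Nonempty) :
    ∃ T ⊆ S, ChainConnected r (φ '' T) ∧ ∀ t ∈ T, ∀ q ∈ S, q ∉ T → r < dist (φ q) (φ t) := by
  classical
  obtain ⟨p, hp⟩ := hS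
  obtain ⟨T, hT, hmax⟩ := Finset.exists_max_image
    (S.powerset.filter fun T : Finset K ↦ ChainConnected r (φ '' T)) Finset.card
    ⟨{p}, by simpa [hp] using ChainConnected.singleton (φ p)⟩
  simp only [Finset.mem_filter, Finset.mem_powerset, and_imp] at hT hmax
  refine ⟨T, hT.1, hT.2, fun t ht q hqS hqT ↦ ?_⟩
  by_contra! hqt
  have hinsert : ChainConnected r (φ '' (insert q T : Finset K)) := by
    rw [Finset.coe_insert, Set.image_insert_eq]
    exact hT.2.insert_of_dist_le (Set.mem_image_of_mem φ ht) hqt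
  have hcard := hmax _ (Finset.insert_subset hqS hT.1) hinsert
  rw [Finset.card_insert_of_notMem hqT] at hcard
  omega

end ChainConnected

section Shell

open Module

variable {V : Type*} [NormedAddCommGroup V]

/-- The points whose squared distance to `c` differs from `μ` by at most `w`. For large `μ` this is
a shell around a sphere, of thickness comparable to `w / √μ`. -/
def sphericalShell (c : V) (μ w : ℝ) : Set V := {x | |‖x - c‖ ^ 2 - μ| ≤ w}

lemma finite_preimage_sphericalShell {K : Type*} {φ : K → V} (hφ : ∀ R, {k | ‖φ k‖ ≤ R}.Finite)
    (c : V) (μ w : ℝ) : (φ ⁻¹' sphericalShell c μ w).Finite := by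
  refine (hφ (√(μ + w) + ‖c‖)).subset fun k (hk : |‖φ k - c‖ ^ 2 - μ| ≤ w) ↦ ?_
  have hsqrt : ‖φ k - c‖ ≤ √(μ + w) := Real.le_sqrt_of_sq_le (by linarith [(abs_le.1 hk).2])
  calc ‖φ k‖ ≤ ‖φ k - c‖ + ‖c‖ := norm_le_norm_sub_add _ _
    _ ≤ √(μ + w) + ‖c‖ := by gcongr

variable [InnerProductSpace ℝ V]

lemma abs_sq_norm_sub_add_inner_le {c : V} {μ w : ℝ} {x p : V} (hx : x ∈ sphericalShell c μ w)
    (hp : p ∈ sphericalShell c μ w) : |‖x - p‖ ^ 2 + 2 * inner ℝ (x - p) (p - c)| ≤ 2 * w := by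
  have hexpand : ‖x - p‖ ^ 2 + 2 * inner ℝ (x - p) (p - c) =
      (‖x - c‖ ^ 2 - μ) - (‖p - c‖ ^ 2 - μ) := by
    rw [← sub_add_sub_cancel x p c, norm_add_sq_real]
    ring
  calc |‖x - p‖ ^ 2 + 2 * inner ℝ (x - p) (p - c)|
      ≤ |‖x - c‖ ^ 2 - μ| + |‖p - c‖ ^ 2 - μ| := hexpand ▸ abs_sub _ _
    _ ≤ 2 * w := by linarith [show |‖x - c‖ ^ 2 - μ| ≤ w from hx,
        show |‖p - c‖ ^ 2 - μ| ≤ w from hp]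

lemma exists_abs_inner_le_of_mem_span {A : Set V} (hA : A.Finite) :
    ∃ L : ℝ, 0 ≤ L ∧ ∀ x ∈ Submodule.span ℝ A, ∀ (v : V) (M : ℝ),
      (∀ a ∈ A, |inner ℝ a v| ≤ M) → |inner ℝ x v| ≤ L * M * ‖x‖ := by
  have := hA.fintype
  let F : (A → ℝ) →ₗ[ℝ] V := Fintype.linearCombination ℝ (↑)
  obtain ⟨g, hg⟩ := F.rangeRestrict.exists_rightInverse_of_surjective F.range_rangeRestrict
  let g' := LinearMap.toContinuousLinearMap g
  refine ⟨Fintype.card A * ‖g'‖, by positivity, fun x hx v M hM ↦ ?_⟩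
  have hxF : x ∈ F.range := by rwa [Fintype.range_linearCombination, Subtype.range_coe]
  have hcoord (a : A) : |g ⟨x, hxF⟩ a| ≤ ‖g'‖ * ‖x‖ :=
    (norm_le_pi_norm (g ⟨x, hxF⟩) a).trans (g'.le_opNorm ⟨x, hxF⟩)
  have hsum : ∑ a, g ⟨x, hxF⟩ a • (a : V) = x :=
    congrArg Subtype.val (LinearMap.congr_fun hg ⟨x, hxF⟩)
  calc |inner ℝ x v| = |∑ a, g ⟨x, hxF⟩ a * inner ℝ (a : V) v| := by
        conv_lhs => rw [← hsum]
        simp [sum_inner, inner_smul_left]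
    _ ≤ ∑ a, |g ⟨x, hxF⟩ a| * |inner ℝ (a : V) v| := by
        simp only [← abs_mul]
        exact Finset.abs_sum_le_sum_abs _ _
    _ ≤ ∑ _a : A, ‖g'‖ * ‖x‖ * M := by gcongr with a; exacts [hcoord a, hM a a.2]
    _ = _ := by rw [Finset.sum_const, Finset.card_univ, nsmul_eq_mul]; ring

lemma exists_forall_subset_abs_inner_le {A : Set V} (hA : A.Finite) :
    ∃ L : ℝ, 0 ≤ L ∧ ∀ B ⊆ A, ∀ x ∈ Submodule.span ℝ B, ∀ (v : V) (M : ℝ), 0 ≤ M →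
      (∀ b ∈ B, |inner ℝ b v| ≤ M) → |inner ℝ x v| ≤ L * M * ‖x‖ := by
  choose! L hL₀ hL using fun (B : Set V) (hB : B ⊆ A) ↦
    exists_abs_inner_le_of_mem_span (hA.subset hB)
  obtain ⟨L', hL'⟩ := (hA.finite_subsets.image L).bddAbove
  have hle (B : Set V) (hB : B ⊆ A) : L B ≤ L' := hL' (Set.mem_image_of_mem L hB)
  refine ⟨L', (hL₀ A subset_rfl).trans (hle A subset_rfl), fun B hB x hx v M hM hBM ↦ ?_⟩
  calc |inner ℝ x v| ≤ L B * M * ‖x‖ := hL B hB x hx v M hBM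
    _ ≤ L' * M * ‖x‖ := by gcongr; exact hle B hB

variable {Λ : AddSubgroup V}

/- The differences `t - p` with `t ∈ T` form one of finitely many sets, and on each of them the
shell condition bounds the inner product with `p - c`, however far away `c` is. So it does on their
span, which contains `x - p`, and the shell condition for `x` then bounds `‖x - p‖`. -/
lemma exists_dist_le_of_vectorSpan_le (hΛ : ∀ R, ((Λ : Set V) ∩ Metric.closedBall 0 R).Finite)
    (w R : ℝ) : ∃ R' : ℝ, ∀ (c : V) (μ : ℝ) (S T : Set V), S ⊆ Λ → S ⊆ sphericalShell c μ w →
      T ⊆ S → (∀ x ∈ T, ∀ y ∈ T, dist x y ≤ R) → vectorSpan ℝ S ≤ vectorSpan ℝ T →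
      ∀ p ∈ T, ∀ x ∈ S, dist x p ≤ R' := by
  obtain ⟨L, hL₀, hL⟩ := exists_forall_subset_abs_inner_le (hΛ R)
  set M := |w| + R ^ 2 / 2 with hMdef
  have hM : 0 ≤ M := by positivity
  refine ⟨1 + 2 * |w| + 2 * (L * M), fun c μ S T hSΛ hS hTS hTR hspan p hp x hx ↦ ?_⟩
  have hsq (y : V) (hy : y ∈ S) := abs_le.1 (abs_sq_norm_sub_add_inner_le (hS hy) (hS (hTS hp)))
  have hmem : x - p ∈ Submodule.span ℝ ((· -ᵥ p) '' T) := by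
    rw [← vectorSpan_eq_span_vsub_set_right ℝ hp]
    exact hspan (vsub_mem_vectorSpan ℝ hx (hTS hp))
  have hsub : (· -ᵥ p) '' T ⊆ (Λ : Set V) ∩ Metric.closedBall 0 R := by
    rintro _ ⟨t, ht, rfl⟩
    exact ⟨Λ.sub_mem (hSΛ (hTS ht)) (hSΛ (hTS hp)),
      by simpa [dist_eq_norm] using hTR t ht p hp⟩
  have hT (t : V) (ht : t ∈ T) : |inner ℝ (t - p) (p - c)| ≤ M := by
    have htp : ‖t - p‖ ^ 2 ≤ R ^ 2 := by
      gcongr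
      exact dist_eq_norm t p ▸ hTR t ht p hp
    obtain ⟨hlower, hupper⟩ := hsq t (hTS ht)
    exact abs_le.2 ⟨by linarith [le_abs_self w], by linarith [le_abs_self w, sq_nonneg ‖t - p‖]⟩
  have hinner : |inner ℝ (x - p) (p - c)| ≤ L * M * ‖x - p‖ :=
    hL _ hsub _ hmem _ M hM (Set.forall_mem_image.2 hT)
  rw [dist_eq_norm]
  have hquad : ‖x - p‖ ^ 2 ≤ 2 * |w| + 2 * (L * M) * ‖x - p‖ := by
    linarith [(hsq x hx).2, (abs_le.1 hinner).1, le_abs_self w]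
  by_contra! hlt
  nlinarith [abs_nonneg w, mul_nonneg hL₀ hM]

lemma ChainConnected.exists_subset_le_finrank {r R : ℝ} {P : Set V} {j : ℕ}
    (hR : ∀ T ⊆ P, ChainConnected r T → finrank ℝ (vectorSpan ℝ T) < j →
      ∀ x ∈ T, ∀ y ∈ T, dist x y ≤ R)
    {T : Set V} (hT : ChainConnected r T) (hTP : T ⊆ P) (hj : j ≤ finrank ℝ (vectorSpan ℝ T)) :
    ∃ T' ⊆ T, T'.Nonempty ∧ j ≤ finrank ℝ (vectorSpan ℝ T') ∧
      ∀ x ∈ T', ∀ y ∈ T', dist x y ≤ |r| + |R| := by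
  induction hT with
  | singleton p =>
    refine ⟨{p}, subset_rfl, Set.singleton_nonempty p, hj, ?_⟩
    rintro x rfl y rfl
    rw [dist_self]
    positivity
  | @insert_of_dist_le T t q hT ht hqt ih =>
    have hTP' : T ⊆ P := (Set.subset_insert q T).trans hTP
    rcases le_or_gt j (finrank ℝ (vectorSpan ℝ T)) with hjT | hjT
    · obtain ⟨T', hT', h⟩ := ih hTP' hjT
      exact ⟨T', hT'.trans (Set.subset_insert q T), h⟩
    have hTR := hR T hTP' hT hjT
    have hq (x : V) (hx : x ∈ T) : dist q x ≤ |r| + |R| :=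
      (dist_triangle q t x).trans
        (add_le_add (hqt.trans (le_abs_self r)) ((hTR t ht x hx).trans (le_abs_self R)))
    refine ⟨insert q T, subset_rfl, Set.insert_nonempty q T, hj, ?_⟩
    rintro x (rfl | hx) y (rfl | hy)
    · rw [dist_self]
      positivity
    · exact hq y hy
    · exact dist_comm y x ▸ hq x hx
    · linarith [hTR x hx y hy, le_abs_self R, abs_nonneg r]

variable [FiniteDimensional ℝ V]

lemma vectorSpan_le_of_finrank_le {S T : Set V} (hTS : T ⊆ S)
    (h : finrank ℝ (vectorSpan ℝ S) ≤ finrank ℝ (vectorSpan ℝ T)) :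
    vectorSpan ℝ S ≤ vectorSpan ℝ T :=
  (Submodule.eq_of_le_of_finrank_le (vectorSpan_mono ℝ hTS) h).ge

lemma ChainConnected.exists_dist_le (hΛ : ∀ R, ((Λ : Set V) ∩ Metric.closedBall 0 R).Finite)
    (r w : ℝ) (j : ℕ) : ∃ R : ℝ, ∀ (c : V) (μ : ℝ) (T : Set V), ChainConnected r T → T ⊆ Λ →
      T ⊆ sphericalShell c μ w → finrank ℝ (vectorSpan ℝ T) < j →
      ∀ x ∈ T, ∀ y ∈ T, dist x y ≤ R := by
  induction j with
  | zero => exact ⟨0, fun _ _ _ _ _ _ h ↦ absurd h (Nat.not_lt_zero _)⟩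
  | succ j ih =>
    obtain ⟨R, hR⟩ := ih
    obtain ⟨R', hR'⟩ := exists_dist_le_of_vectorSpan_le hΛ w (|r| + |R|)
    refine ⟨max R (R' + R'), fun c μ T hT hTΛ hTc hj x hx y hy ↦ ?_⟩
    rcases lt_or_ge (finrank ℝ (vectorSpan ℝ T)) j with hlt | hge
    · exact (hR c μ T hT hTΛ hTc hlt x hx y hy).trans (le_max_left _ _)
    obtain ⟨T', hT'T, ⟨p, hp⟩, hjT', hdist⟩ :=
      hT.exists_subset_le_finrank (P := Λ ∩ sphericalShell c μ w)
        (fun U hU hUr ↦ hR c μ U hUr (hU.trans Set.inter_subset_left)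
          (hU.trans Set.inter_subset_right)) (Set.subset_inter hTΛ hTc) hge
    have hspan := vectorSpan_le_of_finrank_le hT'T ((Nat.le_of_lt_succ hj).trans hjT')
    have hp := hR' c μ T T' hTΛ hTc hT'T hdist hspan p hp
    exact (dist_triangle_right x y p).trans
      ((add_le_add (hp x hx) (hp y hy)).trans (le_max_right _ _))

lemma exists_forall_finrank_lt_or_dist_le
    (hΛ : ∀ R, ((Λ : Set V) ∩ Metric.closedBall 0 R).Finite) (r w : ℝ) (j : ℕ) :
    ∃ R : ℝ, ∀ (c : V) (μ : ℝ) (S : Set V), S ⊆ Λ → S ⊆ sphericalShell c μ w →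
      finrank ℝ (vectorSpan ℝ S) < j + 1 →
      (∀ T ⊆ S, ChainConnected r T → finrank ℝ (vectorSpan ℝ T) < j) ∨
        ∃ p ∈ S, ∀ x ∈ S, dist x p ≤ R := by
  obtain ⟨R, hR⟩ := ChainConnected.exists_dist_le hΛ r w (j + 1)
  obtain ⟨R', hR'⟩ := exists_dist_le_of_vectorSpan_le hΛ w R
  refine ⟨R', fun c μ S hSΛ hS hj ↦ or_iff_not_imp_left.2 fun h ↦ ?_⟩
  push Not at h
  obtain ⟨T, hTS, hT, hjT⟩ := h
  obtain ⟨p, hp⟩ := hT.nonempty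
  have hspan := vectorSpan_le_of_finrank_le hTS ((Nat.le_of_lt_succ hj).trans hjT)
  have hjT' := (Submodule.finrank_mono (vectorSpan_mono ℝ hTS)).trans_lt hj
  exact ⟨p, hTS hp, hR' c μ S T hSΛ hS hTS
    (hR c μ T hT (hTS.trans hSΛ) (hTS.trans hS) hjT') hspan p hp⟩

end Shell

section CharacterSystem

open scoped Topology

variable {K G : Type*} [TopologicalSpace G]

/-- Trigonometric polynomials with frequencies in `S`. -/
noncomputable def trigPoly (e : K → C(G, ℂ)) (S : Set K) : Submodule ℂ C(G, ℂ) :=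
  Submodule.span ℂ (e '' S)

lemma trigPoly_union (e : K → C(G, ℂ)) (S T : Set K) :
    trigPoly e (S ∪ T) = trigPoly e S ⊔ trigPoly e T := by
  rw [trigPoly, Set.image_union, Submodule.span_union, trigPoly, trigPoly]

lemma mem_trigPoly_finset_iff {e : K → C(G, ℂ)} {S : Finset K} {P : C(G, ℂ)} :
    P ∈ trigPoly e S ↔ ∃ a : K → ℂ, ∑ k ∈ S, a k • e k = P := by
  refine (Submodule.mem_span_image_finset_iff_exists_fun ℂ).trans ⟨?_, ?_⟩
  · rintro ⟨c, rfl⟩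
    refine ⟨Function.extend (↑) c 0, ?_⟩
    rw [← Finset.sum_coe_sort]
    simp only [Subtype.val_injective.extend_apply]
  · rintro ⟨a, rfl⟩
    exact ⟨fun k ↦ a k, Finset.sum_coe_sort S fun k ↦ a k • e k⟩

variable [AddCommGroup K] [AddCommGroup G]

/-- `e` identifies the group `K` with a group of unitary characters of `G` that separates the
points of `G`; for compact `G` this makes `K` the dual group. -/
structure IsCharacterSystem (e : K → C(G, ℂ)) : Prop where
  map_zero : e 0 = 1
  map_add (k l : K) : e (k + l) = e k * e l
  map_neg (k : K) : e (-k) = star (e k)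
  apply_add (k : K) (x y : G) : e k (x + y) = e k x * e k y
  exists_apply_ne_one {k : K} : k ≠ 0 → ∃ x, e k x ≠ 1
  exists_apply_ne {x y : G} : x ≠ y → ∃ k, e k x ≠ e k y

namespace IsCharacterSystem

variable {e : K → C(G, ℂ)} (he : IsCharacterSystem e)

include he

lemma norm_apply (k : K) (x : G) : ‖e k x‖ = 1 := by
  have hmul : star (e k) * e k = 1 := by
    rw [← he.map_neg, ← he.map_add, neg_add_cancel, he.map_zero]
  have hsq : ((‖e k x‖ ^ 2 : ℝ) : ℂ) = 1 := by
    rw [Complex.ofReal_pow, ← Complex.conj_mul']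
    exact DFunLike.congr_fun hmul x
  exact (pow_eq_one_iff_of_nonneg (norm_nonneg _) two_ne_zero).1 (by exact_mod_cast hsq)

lemma apply_ne_zero (k : K) (x : G) : e k x ≠ 0 :=
  norm_ne_zero_iff.1 ((he.norm_apply k x).symm ▸ one_ne_zero)

lemma apply_zero (k : K) : e k 0 = 1 :=
  mul_left_cancel₀ (he.apply_ne_zero k 0) (by rw [← he.apply_add, add_zero, mul_one])

lemma t2Space : T2Space G :=
  .of_injective_continuous (f := fun x k ↦ e k x)
    (fun x y hxy ↦ by
      by_contra hne
      obtain ⟨k, hk⟩ := he.exists_apply_ne hne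
      exact hk (congrFun hxy k))
    (by fun_prop)

lemma exists_mem_apply_ne_one [IsTopologicalAddGroup G] [ConnectedSpace G] {k : K} (hk : k ≠ 0)
    {U : Set G} (hU : U ∈ 𝓝 0) : ∃ x ∈ U, e k x ≠ 1 := by
  let H : AddSubgroup G :=
    { carrier := {x | e k x = 1}
      zero_mem' := he.apply_zero k
      add_mem' := fun {x y} (hx : e k x = 1) (hy : e k y = 1) ↦ by
        simp [he.apply_add, hx, hy]
      neg_mem' := fun {x} (hx : e k x = 1) ↦ by
        simpa [hx, he.apply_zero] using (he.apply_add k x (-x)).symm }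
  by_contra! h
  have hopen : IsOpen (H : Set G) := H.isOpen_of_mem_nhds (g := 0) (mem_of_superset hU h)
  have huniv : (H : Set G) = Set.univ :=
    IsClopen.eq_univ ⟨H.isClosed_of_isOpen hopen, hopen⟩ ⟨0, he.apply_zero k⟩
  obtain ⟨x, hx⟩ := he.exists_apply_ne_one hk
  exact hx (huniv.ge (Set.mem_univ x))

lemma mul_mem_trigPoly {B S : Set K} {P Q : C(G, ℂ)} (hP : P ∈ trigPoly e B)
    (hQ : Q ∈ trigPoly e S) : P * Q ∈ trigPoly e (Set.image2 (· + ·) B S) := by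
  have hPQ := Submodule.mul_mem_mul hP hQ
  rw [trigPoly, trigPoly, Submodule.span_mul_span] at hPQ
  refine Submodule.span_mono ?_ hPQ
  rintro _ ⟨_, ⟨b, hb, rfl⟩, _, ⟨k, hk, rfl⟩, rfl⟩
  exact ⟨b + k, Set.mem_image2_of_mem hb hk, he.map_add b k⟩

/- If `∑ aₖ eₖ` vanishes near `x`, then so does its twisted difference
`∑ aₖ (eₖ s - e_q s) eₖ` for small `s`, which no longer contains the frequency `q`. -/
lemma eq_zero_of_sum_eq_zero [IsTopologicalAddGroup G] [ConnectedSpace G] (S : Finset K)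
    (a : K → ℂ) {U : Set G} (hU : IsOpen U) (hne : U.Nonempty)
    (hzero : ∀ x ∈ U, ∑ k ∈ S, a k * e k x = 0) : ∀ k ∈ S, a k = 0 := by
  classical
  induction S using Finset.induction_on generalizing a U with
  | empty => simp
  | insert q S hq ih =>
    obtain ⟨x, hx⟩ := hne
    have hS : ∀ k ∈ S, a k = 0 := by
      intro k hk
      have hkq : k - q ≠ 0 := sub_ne_zero.2 fun h ↦ hq (h ▸ hk)
      have hnhds : (x + ·) ⁻¹' U ∈ 𝓝 0 :=
        (hU.preimage (by fun_prop)).mem_nhds (by simpa using hx)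
      obtain ⟨s, hs, hne⟩ := he.exists_mem_apply_ne_one hkq hnhds
      have hdiff := ih (fun k ↦ a k * (e k s - e q s)) (U := U ∩ (· + s) ⁻¹' U)
        (hU.inter (hU.preimage (by fun_prop))) ⟨x, hx, hs⟩ (fun y ⟨hy, hys⟩ ↦ by
          have hsub : ∑ k ∈ insert q S, a k * (e k s - e q s) * e k y =
              ∑ k ∈ insert q S, a k * e k (y + s) - e q s * ∑ k ∈ insert q S, a k * e k y := by
            rw [Finset.mul_sum, ← Finset.sum_sub_distrib]
            exact Finset.sum_congr rfl fun k _ ↦ by rw [he.apply_add]; ring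
          rwa [hzero y hy, hzero _ hys, mul_zero, sub_zero, Finset.sum_insert hq, sub_self,
            mul_zero, zero_mul, zero_add] at hsub) k hk
      refine (mul_eq_zero.1 hdiff).resolve_right fun h ↦ hne ?_
      rw [← sub_add_cancel k q, he.map_add, ContinuousMap.mul_apply, sub_eq_zero] at h
      exact (mul_eq_right₀ (he.apply_ne_zero q s)).1 h
    have hqx := hzero x hx
    rw [Finset.sum_insert hq, Finset.sum_eq_zero fun k hk ↦ by rw [hS k hk, zero_mul], add_zero]
      at hqx
    exact Finset.forall_mem_insert _ _ _ |>.2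
      ⟨(mul_eq_zero.1 hqx).resolve_right (he.apply_ne_zero q x), hS⟩

lemma eq_zero_of_eqOn_zero [IsTopologicalAddGroup G] [ConnectedSpace G] {S : Finset K}
    {P : C(G, ℂ)} (hP : P ∈ trigPoly e S) {U : Set G} (hU : IsOpen U) (hne : U.Nonempty)
    (hzero : Set.EqOn P 0 U) : P = 0 := by
  obtain ⟨a, rfl⟩ := mem_trigPoly_finset_iff.1 hP
  have ha := he.eq_zero_of_sum_eq_zero S a hU hne fun x hx ↦ by simpa using hzero hx
  exact Finset.sum_eq_zero fun k hk ↦ by rw [ha k hk]; exact zero_smul ℂ (e k)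

variable [CompactSpace G]

lemma topologicalClosure_span_range :
    (Submodule.span ℂ (Set.range e)).topologicalClosure = ⊤ := by
  let A : StarSubalgebra ℂ C(G, ℂ) :=
    { toSubalgebra := Algebra.adjoin ℂ (Set.range e)
      star_mem' := by
        change Algebra.adjoin ℂ (Set.range e) ≤ star (Algebra.adjoin ℂ (Set.range e))
        refine Algebra.adjoin_le ?_
        rintro _ ⟨k, rfl⟩
        exact Algebra.subset_adjoin ⟨-k, he.map_neg k⟩ }
  have hsep : A.SeparatesPoints := fun x y hxy ↦
    let ⟨k, hk⟩ := he.exists_apply_ne hxy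
    ⟨e k, ⟨e k, Algebra.subset_adjoin ⟨k, rfl⟩, rfl⟩, hk⟩
  have hspan : Subalgebra.toSubmodule A.toSubalgebra = Submodule.span ℂ (Set.range e) := by
    refine Algebra.adjoin_eq_span_of_subset (R := ℂ) fun f hf ↦ Submodule.subset_span ?_
    induction hf using Submonoid.closure_induction with
    | mem _ hf => exact hf
    | one => exact ⟨0, he.map_zero⟩
    | mul f g _ _ hf hg =>
      obtain ⟨⟨k, rfl⟩, l, rfl⟩ := hf, hg
      exact ⟨k + l, he.map_add k l⟩
  have htop := ContinuousMap.starSubalgebra_topologicalClosure_eq_top_of_separatesPoints A hsep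
  rw [← hspan, eq_top_iff]
  exact fun f _ ↦ htop.ge (show f ∈ (⊤ : StarSubalgebra ℂ C(G, ℂ)) from trivial)

lemma exists_trigPoly_norm_sub_le (f : C(G, ℂ)) {δ : ℝ} (hδ : 0 < δ) :
    ∃ B : Finset K, ∃ p ∈ trigPoly e B, ‖p - f‖ ≤ δ := by
  have hf : f ∈ closure (Submodule.span ℂ (Set.range e) : Set C(G, ℂ)) :=
    he.topologicalClosure_span_range.ge Submodule.mem_top
  obtain ⟨p, hp, hpf⟩ := Metric.mem_closure_iff.1 hf δ hδ
  obtain ⟨c, rfl⟩ := Finsupp.mem_span_range_iff_exists_finsupp.1 hp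
  exact ⟨c.support, _, mem_trigPoly_finset_iff.2 ⟨c, rfl⟩, by
    rw [← dist_eq_norm, dist_comm]; exact hpf.le⟩

end IsCharacterSystem

end CharacterSystem

section SquareIntegrable

open Module

variable {G : Type*} [TopologicalSpace G] [MeasurableSpace G] [BorelSpace G]

lemma IsCharacterSystem.integral_eq_zero [AddCommGroup G] [IsTopologicalAddGroup G] {K : Type*}
    [AddCommGroup K] {e : K → C(G, ℂ)} (he : IsCharacterSystem e) {ν : Measure G}
    [ν.IsAddLeftInvariant] {k : K} (hk : k ≠ 0) : ∫ x, e k x ∂ν = 0 := by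
  obtain ⟨y, hy⟩ := he.exists_apply_ne_one hk
  have hinv : e k y * ∫ x, e k x ∂ν = ∫ x, e k x ∂ν := by
    rw [← integral_const_mul, ← integral_add_left_eq_self (fun x ↦ e k x) y]
    simp only [he.apply_add]
  by_contra hne
  exact hy ((mul_eq_right₀ hne).1 hinv)

variable [CompactSpace G]

/-- The class in `L²(ν)` of a continuous function. -/
noncomputable abbrev toL2 (ν : Measure G) [IsFiniteMeasure ν] : C(G, ℂ) →L[ℂ] Lp ℂ 2 ν :=
  ContinuousMap.toLp 2 ν ℂ

variable (ν : Measure G) [IsFiniteMeasure ν]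

lemma norm_toL2_mul_le (f g : C(G, ℂ)) : ‖toL2 ν (f * g)‖ ≤ ‖f‖ * ‖toL2 ν g‖ := by
  refine Lp.norm_le_mul_norm_of_ae_le_mul ?_
  filter_upwards [ContinuousMap.coeFn_toLp ν (p := 2) (𝕜 := ℂ) (f * g),
    ContinuousMap.coeFn_toLp ν (p := 2) (𝕜 := ℂ) g] with x hfg hg
  rw [hfg, hg, ContinuousMap.mul_apply, norm_mul]
  gcongr
  exact f.norm_coe_le_norm x

variable {ν}

lemma sub_mul_norm_toL2_le {f g P : C(G, ℂ)} {c δ : ℝ} (hfg : ‖f - g‖ ≤ δ)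
    (hf : c * ‖toL2 ν P‖ ≤ ‖toL2 ν (f * P)‖) : (c - δ) * ‖toL2 ν P‖ ≤ ‖toL2 ν (g * P)‖ := by
  have hsplit : ‖toL2 ν (f * P)‖ ≤ ‖toL2 ν (g * P)‖ + δ * ‖toL2 ν P‖ :=
    calc ‖toL2 ν (f * P)‖ = ‖toL2 ν (g * P) + toL2 ν ((f - g) * P)‖ := by
          rw [← map_add, ← add_mul, add_sub_cancel]
      _ ≤ ‖toL2 ν (g * P)‖ + ‖f - g‖ * ‖toL2 ν P‖ :=
          (norm_add_le _ _).trans (by gcongr; exact norm_toL2_mul_le ν _ _)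
      _ ≤ _ := by gcongr
  linarith

lemma disjoint_image2_add {K V : Type*} [AddCommGroup K] [SeminormedAddCommGroup V] (φ : K →+ V)
    {B S T : Set K} {r : ℝ} (hB : ∀ b ∈ B, ∀ b' ∈ B, dist (φ b) (φ b') ≤ r)
    (hST : ∀ s ∈ S, ∀ t ∈ T, r < dist (φ t) (φ s)) :
    Disjoint (Set.image2 (· + ·) B S) (Set.image2 (· + ·) B T) := by
  rw [Set.disjoint_left]
  rintro _ ⟨b, hb, s, hs, rfl⟩ ⟨b', hb', t, ht, hbt : b' + t = b + s⟩
  have hsub : t - s = b - b' := sub_eq_sub_iff_add_eq_add.2 (by rw [add_comm t, hbt])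
  refine (hST s hs t ht).not_ge (le_of_eq_of_le ?_ (hB b hb b' hb'))
  rw [dist_eq_norm, dist_eq_norm, ← map_sub, ← map_sub, hsub]

namespace IsCharacterSystem

variable [AddCommGroup G] {K : Type*} [AddCommGroup K] {e : K → C(G, ℂ)}
  (he : IsCharacterSystem e)

include he

lemma norm_toL2_mul (k : K) (P : C(G, ℂ)) : ‖toL2 ν (e k * P)‖ = ‖toL2 ν P‖ := by
  have hle (k : K) (P : C(G, ℂ)) : ‖toL2 ν (e k * P)‖ ≤ ‖toL2 ν P‖ := by
    refine (norm_toL2_mul_le ν (e k) P).trans (mul_le_of_le_one_left (norm_nonneg _) ?_)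
    exact (ContinuousMap.norm_le _ zero_le_one).2 fun x ↦ (he.norm_apply k x).le
  refine (hle k P).antisymm ?_
  simpa [← mul_assoc, ← he.map_add, he.map_zero] using hle (-k) (e k * P)

lemma inner_toL2_self (k : K) : inner ℂ (toL2 ν (e k)) (toL2 ν (e k)) = ν.real Set.univ := by
  rw [ContinuousMap.inner_toLp]
  simp [Complex.mul_conj', he.norm_apply]

variable [IsTopologicalAddGroup G]

lemma inner_toL2_of_ne [ν.IsAddLeftInvariant] {k l : K} (hkl : k ≠ l) :
    inner ℂ (toL2 ν (e k)) (toL2 ν (e l)) = 0 := by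
  have hmul (x : G) : e l x * starRingEnd ℂ (e k x) = e (l - k) x := by
    rw [sub_eq_add_neg, he.map_add, he.map_neg]
    rfl
  rw [ContinuousMap.inner_toLp]
  simp only [hmul]
  exact he.integral_eq_zero (sub_ne_zero.2 hkl.symm)

lemma inner_toL2_eq_zero_of_disjoint [ν.IsAddLeftInvariant] {A B : Set K} (hAB : Disjoint A B)
    {P Q : C(G, ℂ)} (hP : P ∈ trigPoly e A) (hQ : Q ∈ trigPoly e B) :
    inner ℂ (toL2 ν P) (toL2 ν Q) = 0 := by
  have hortho :
      (trigPoly e A).map (toL2 ν).toLinearMap ⟂ (trigPoly e B).map (toL2 ν).toLinearMap := by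
    simp only [trigPoly, Submodule.map_span]
    rw [Submodule.isOrtho_span]
    rintro _ ⟨_, ⟨k, hk, rfl⟩, rfl⟩ _ ⟨_, ⟨l, hl, rfl⟩, rfl⟩
    exact he.inner_toL2_of_ne (hAB.ne_of_mem hk hl)
  exact Submodule.isOrtho_iff_inner_eq.1 hortho _ (Submodule.mem_map_of_mem hP) _
    (Submodule.mem_map_of_mem hQ)

/- Products of `p` with trigonometric polynomials on distinct components of `S` are orthogonal, so
squared norms add up over the components. -/
lemma mul_norm_toL2_le_of_chainConnected [ν.IsAddLeftInvariant] {V : Type*}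
    [SeminormedAddCommGroup V] (φ : K →+ V) {B : Set K} {p : C(G, ℂ)} (hp : p ∈ trigPoly e B)
    {r : ℝ} (hB : ∀ b ∈ B, ∀ b' ∈ B, dist (φ b) (φ b') ≤ r) {c : ℝ} (hc : 0 ≤ c) (S : Finset K)
    (h : ∀ T ⊆ S, ChainConnected r (φ '' T) → ∀ Q ∈ trigPoly e T,
      c * ‖toL2 ν Q‖ ≤ ‖toL2 ν (p * Q)‖) :
    ∀ Q ∈ trigPoly e S, c * ‖toL2 ν Q‖ ≤ ‖toL2 ν (p * Q)‖ := by
  classical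
  induction S using Finset.strongInduction with
  | H S ih =>
    intro Q hQ
    rcases S.eq_empty_or_nonempty with rfl | hS
    · obtain rfl : Q = 0 := by simpa [trigPoly] using hQ
      simp
    obtain ⟨T, hTS, hT, hsep⟩ := exists_chainConnected_component r φ hS
    have hST : S \ T ⊂ S := Finset.sdiff_ssubset hTS (by simpa using hT.nonempty)
    obtain ⟨Q₁, hQ₁, Q₂, hQ₂, rfl⟩ : ∃ Q₁ ∈ trigPoly e T, ∃ Q₂ ∈ trigPoly e ↑(S \ T),
        Q₁ + Q₂ = Q := by
      rwa [← Submodule.mem_sup, ← trigPoly_union, ← Finset.coe_union,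
        Finset.union_sdiff_of_subset hTS]
    have hdisj : Disjoint (T : Set K) ↑(S \ T) := Finset.disjoint_coe.2 Finset.disjoint_sdiff
    have hdisj' : Disjoint (Set.image2 (· + ·) B T) (Set.image2 (· + ·) B ↑(S \ T)) :=
      disjoint_image2_add φ hB fun t ht q hq ↦
        hsep t ht q (Finset.mem_sdiff.1 hq).1 (Finset.mem_sdiff.1 hq).2
    have hsq := norm_add_sq_eq_norm_sq_add_norm_sq_of_inner_eq_zero _ _
      (he.inner_toL2_eq_zero_of_disjoint (ν := ν) hdisj hQ₁ hQ₂)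
    have hsq' := norm_add_sq_eq_norm_sq_add_norm_sq_of_inner_eq_zero _ _
      (he.inner_toL2_eq_zero_of_disjoint (ν := ν) hdisj' (he.mul_mem_trigPoly hp hQ₁)
        (he.mul_mem_trigPoly hp hQ₂))
    have h₁ := h T hTS hT Q₁ hQ₁
    have h₂ := ih _ hST (fun T' hT' ↦ h T' (hT'.trans hST.subset)) Q₂ hQ₂
    rw [mul_add, _root_.map_add, _root_.map_add, ← sq_le_sq₀ (by positivity) (by positivity)]
    calc _ = (c * ‖toL2 ν Q₁‖) ^ 2 + (c * ‖toL2 ν Q₂‖) ^ 2 := by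
          linear_combination c ^ 2 * hsq
      _ ≤ ‖toL2 ν (p * Q₁)‖ ^ 2 + ‖toL2 ν (p * Q₂)‖ ^ 2 := by gcongr
      _ = _ := by linear_combination -hsq'

section Connected

variable [ConnectedSpace G] [ν.IsOpenPosMeasure]

lemma exists_mul_norm_toL2_le_of_finset {h : C(G, ℂ)} (hh : h ≠ 0) (F : Finset K) :
    ∃ c > 0, ∀ P ∈ trigPoly e F, c * ‖toL2 ν P‖ ≤ ‖toL2 ν (h * P)‖ := by
  have : FiniteDimensional ℂ (trigPoly e (F : Set K)) :=
    FiniteDimensional.span_of_finite ℂ (F.finite_toSet.image e)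
  let mulH : trigPoly e (F : Set K) →ₗ[ℂ] Lp ℂ 2 ν :=
    (toL2 ν).toLinearMap ∘ₗ LinearMap.mulLeft ℂ h ∘ₗ (trigPoly e (F : Set K)).subtype
  have hker : mulH.ker = ⊥ := by
    refine LinearMap.ker_eq_bot'.2 fun P hP ↦ Subtype.ext ?_
    have hzero : h * (P : C(G, ℂ)) = 0 :=
      ContinuousMap.toLp_injective ν (hP.trans (_root_.map_zero (toL2 ν)).symm)
    obtain ⟨x, hx⟩ := DFunLike.ne_iff.1 hh
    exact he.eq_zero_of_eqOn_zero P.2 (isOpen_ne_fun h.continuous continuous_const) ⟨x, hx⟩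
      fun y hy ↦ (mul_eq_zero.1 (DFunLike.congr_fun hzero y)).resolve_left hy
  obtain ⟨L, hL, hanti⟩ := mulH.exists_antilipschitzWith hker
  have : (0 : ℝ) < L := hL
  refine ⟨((‖toL2 ν‖ + 1) * L)⁻¹, by positivity, fun P hP ↦ ?_⟩
  rw [inv_mul_le_iff₀ (by positivity)]
  calc ‖toL2 ν P‖ ≤ (‖toL2 ν‖ + 1) * ‖P‖ :=
        ((toL2 ν).le_opNorm P).trans (by gcongr; linarith)
    _ ≤ (‖toL2 ν‖ + 1) * (L * ‖toL2 ν (h * P)‖) := by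
        gcongr
        have hdist := hanti.le_mul_dist ⟨P, hP⟩ 0
        rw [_root_.map_zero, dist_zero_right, dist_zero_right] at hdist
        exact hdist
    _ = _ := by ring

lemma exists_mul_norm_toL2_le_of_sub_mem {h : C(G, ℂ)} (hh : h ≠ 0) {F : Set K} (hF : F.Finite) :
    ∃ c > 0, ∀ (S : Set K) (q : K), (∀ k ∈ S, k - q ∈ F) →
      ∀ P ∈ trigPoly e S, c * ‖toL2 ν P‖ ≤ ‖toL2 ν (h * P)‖ := by
  lift F to Finset K using hF
  obtain ⟨c, hc, hcF⟩ := he.exists_mul_norm_toL2_le_of_finset (ν := ν) hh F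
  refine ⟨c, hc, fun S q hS P hP ↦ ?_⟩
  have hmem : e (-q) * P ∈ trigPoly e F := by
    have hq : e (-q) ∈ trigPoly e {-q} := Submodule.subset_span ⟨-q, rfl, rfl⟩
    refine Submodule.span_mono (Set.image_mono ?_) (he.mul_mem_trigPoly hq hP)
    rintro _ ⟨_, rfl, k, hk, rfl⟩
    simpa [neg_add_eq_sub] using hS k hk
  simpa only [mul_left_comm h, he.norm_toL2_mul] using hcF _ hmem

/- Induction on the dimension spanned by `S`. If every connected piece of `S` spans less, the bound
for the pieces passes to `S` once `h` is replaced by a nearby trigonometric polynomial; otherwise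
`S` lies in a translate of a fixed finite set. -/
lemma exists_mul_norm_toL2_le_of_finrank_lt [ν.IsAddLeftInvariant] {V : Type*}
    [NormedAddCommGroup V] [InnerProductSpace ℝ V] [FiniteDimensional ℝ V] {φ : K →+ V}
    (hφ : ∀ R, {k | ‖φ k‖ ≤ R}.Finite) {h : C(G, ℂ)} (hh : h ≠ 0) (w : ℝ) (j : ℕ) :
    ∃ c > 0, ∀ (z : V) (μ : ℝ) (S : Finset K), φ '' S ⊆ sphericalShell z μ w →
      finrank ℝ (vectorSpan ℝ (φ '' S)) < j →
      ∀ P ∈ trigPoly e S, c * ‖toL2 ν P‖ ≤ ‖toL2 ν (h * P)‖ := by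
  induction j with
  | zero => exact ⟨1, one_pos, fun _ _ _ _ hlt ↦ absurd hlt (Nat.not_lt_zero _)⟩
  | succ j ih =>
    obtain ⟨c, hc, hcj⟩ := ih
    obtain ⟨B, p, hp, hph⟩ := he.exists_trigPoly_norm_sub_le h (δ := c / 4) (by positivity)
    obtain ⟨r, hr⟩ := Metric.isBounded_iff.1 (B.finite_toSet.image φ).isBounded
    have hrange (R : ℝ) : ((φ.range : Set V) ∩ Metric.closedBall 0 R).Finite :=
      ((hφ R).image φ).subset fun x ⟨⟨k, hk⟩, hx⟩ ↦
        ⟨k, by simpa [hk] using hx, hk⟩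
    obtain ⟨R, hR⟩ := exists_forall_finrank_lt_or_dist_le hrange r w j
    obtain ⟨c', hc', hc'R⟩ := he.exists_mul_norm_toL2_le_of_sub_mem (ν := ν) hh (hφ R)
    refine ⟨min (c / 2) c', by positivity, fun z μ S hS hjS P hP ↦ ?_⟩
    rcases hR z μ (φ '' S) (fun x ⟨k, _, hk⟩ ↦ ⟨k, hk⟩) hS hjS with hlt | ⟨_, ⟨q, _, rfl⟩, hdist⟩
    · have hpieces (T : Finset K) (hTS : T ⊆ S) (hT : ChainConnected r (φ '' T)) (Q : C(G, ℂ))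
          (hQ : Q ∈ trigPoly e T) : (c - c / 4) * ‖toL2 ν Q‖ ≤ ‖toL2 ν (p * Q)‖ :=
        have hTS' : φ '' T ⊆ φ '' S := Set.image_mono (Finset.coe_subset.2 hTS)
        sub_mul_norm_toL2_le (norm_sub_rev p h ▸ hph)
          (hcj z μ T (hTS'.trans hS) (hlt _ hTS' hT) Q hQ)
      have hpP := he.mul_norm_toL2_le_of_chainConnected φ hp
        (fun b hb b' hb' ↦ hr ⟨b, hb, rfl⟩ ⟨b', hb', rfl⟩) (by linarith) S hpieces P hP
      calc min (c / 2) c' * ‖toL2 ν P‖ ≤ (c - c / 4 - c / 4) * ‖toL2 ν P‖ := by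
            gcongr
            linarith [min_le_left (c / 2) c']
        _ ≤ ‖toL2 ν (h * P)‖ := sub_mul_norm_toL2_le hph hpP
    · calc min (c / 2) c' * ‖toL2 ν P‖ ≤ c' * ‖toL2 ν P‖ := by gcongr; exact min_le_right _ _
        _ ≤ ‖toL2 ν (h * P)‖ := hc'R S q (fun k hk ↦ by
            simpa [dist_eq_norm] using hdist _ (Set.mem_image_of_mem φ hk)) P hP

end Connected

end IsCharacterSystem

end SquareIntegrable

section Hilbert

variable {ι E : Type*} [NormedAddCommGroup E] [InnerProductSpace ℂ E]

lemma hasSum_sq_norm_inner_hilbertBasis (b : HilbertBasis ι ℂ E) (x : E) :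
    HasSum (fun k ↦ ‖inner ℂ (b k) x‖ ^ 2) (‖x‖ ^ 2) := by
  have hsum := b.hasSum_inner_mul_inner x x
  have hterm (k : ι) :
      inner ℂ x (b k) * inner ℂ (b k) x = ((‖inner ℂ (b k) x‖ ^ 2 : ℝ) : ℂ) := by
    rw [← inner_conj_symm x (b k), Complex.conj_mul', Complex.ofReal_pow]
  have hself : inner ℂ x x = ((‖x‖ ^ 2 : ℝ) : ℂ) := by
    rw [inner_self_eq_norm_sq_to_K]
    norm_cast
  simp only [hterm, hself] at hsum
  exact Complex.hasSum_ofReal.1 hsum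

lemma norm_le_of_hilbertBasis (b : HilbertBasis ι ℂ E) {x y : E}
    (hxy : ∀ k, ‖inner ℂ (b k) x‖ ≤ ‖inner ℂ (b k) y‖) : ‖x‖ ≤ ‖y‖ := by
  rw [← sq_le_sq₀ (norm_nonneg _) (norm_nonneg _)]
  exact hasSum_le (fun k ↦ by gcongr; exact hxy k) (hasSum_sq_norm_inner_hilbertBasis b x)
    (hasSum_sq_norm_inner_hilbertBasis b y)

lemma norm_sub_sum_hilbertBasis_le (b : HilbertBasis ι ℂ E) (N : Finset ι) {x y : E}
    (hxy : ∀ k ∉ N, ‖inner ℂ (b k) x‖ ≤ ‖inner ℂ (b k) y‖) :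
    ‖x - ∑ k ∈ N, inner ℂ (b k) x • b k‖ ≤ ‖y‖ := by
  classical
  refine norm_le_of_hilbertBasis b fun k ↦ ?_
  rw [inner_sub_right]
  by_cases hk : k ∈ N
  · rw [b.orthonormal.inner_right_sum _ hk]
    simp
  · have hsum : inner ℂ (b k) (∑ l ∈ N, inner ℂ (b l) x • b l) = 0 := by
      rw [inner_sum]
      refine Finset.sum_eq_zero fun l hl ↦ ?_
      rw [inner_smul_right, b.orthonormal.2 (ne_of_mem_of_not_mem hl hk).symm, mul_zero]
    simpa [hsum] using hxy k hk

end Hilbert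

section Resolvent

open Module
open scoped ComplexConjugate

lemma eLpNorm_mul_le_eLpNorm_restrict {X : Type*} [MeasurableSpace X] {ν : Measure X}
    {p : ℝ≥0∞} {Ω : Set X} (hΩ : MeasurableSet Ω) {h : X → ℂ} (hle : ∀ x, ‖h x‖ ≤ 1)
    (hzero : ∀ x ∉ Ω, h x = 0) (P : X → ℂ) :
    eLpNorm (h * P) p ν ≤ eLpNorm P p (ν.restrict Ω) := by
  rw [← eLpNorm_indicator_eq_eLpNorm_restrict hΩ]
  refine eLpNorm_mono fun x ↦ ?_
  by_cases hx : x ∈ Ω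
  · simpa [hx] using mul_le_of_le_one_left (norm_nonneg _) (hle x)
  · simp [hzero x hx]

lemma eLpNorm_le_of_eLpNorm_le_restrict {X E : Type*} [MeasurableSpace X] [NormedAddCommGroup E]
    {ν : Measure X} {p : ℝ≥0∞} (hp : 1 ≤ p) {Ω : Set X} {u v : X → E}
    (hu : AEStronglyMeasurable u ν) (hv : AEStronglyMeasurable v ν) {C A : ℝ≥0∞}
    (hvΩ : eLpNorm v p ν ≤ C * eLpNorm v p (ν.restrict Ω)) (huv : eLpNorm (u - v) p ν ≤ A) :
    eLpNorm u p ν ≤ (1 + C) * (A + eLpNorm u p (ν.restrict Ω)) := by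
  have hle : eLpNorm v p (ν.restrict Ω) ≤ A + eLpNorm u p (ν.restrict Ω) := by
    rw [← sub_sub_cancel u v, add_comm]
    refine (eLpNorm_sub_le hu.restrict (hu.sub hv).restrict hp).trans ?_
    gcongr
    exact (eLpNorm_mono_measure _ Measure.restrict_le_self).trans huv
  calc eLpNorm u p ν = eLpNorm (u - v + v) p ν := by rw [sub_add_cancel]
    _ ≤ eLpNorm (u - v) p ν + eLpNorm v p ν := eLpNorm_add_le (hu.sub hv) hv hp
    _ ≤ (A + eLpNorm u p (ν.restrict Ω)) + C * (A + eLpNorm u p (ν.restrict Ω)) := by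
        gcongr
        · exact le_add_right huv
        · exact hvΩ.trans (by gcongr)
    _ = (1 + C) * (A + eLpNorm u p (ν.restrict Ω)) := by ring

variable {G : Type*} [TopologicalSpace G]

lemma exists_continuousMap_ne_zero_of_isOpen [NormalSpace G] [T1Space G] {Ω : Set G}
    (hΩ : IsOpen Ω) (hne : Ω.Nonempty) :
    ∃ h : C(G, ℂ), h ≠ 0 ∧ (∀ x, ‖h x‖ ≤ 1) ∧ ∀ x ∉ Ω, h x = 0 := by
  obtain ⟨x₀, hx₀⟩ := hne
  obtain ⟨g, hg₀, hg₁, hg⟩ := exists_continuous_zero_one_of_isClosed hΩ.isClosed_compl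
    (isClosed_singleton (x := x₀)) (Set.disjoint_singleton_right.2 fun h ↦ h hx₀)
  refine ⟨⟨fun x ↦ (g x : ℂ), by fun_prop⟩, fun h ↦ ?_, fun x ↦ ?_, fun x hx ↦ ?_⟩
  · simpa [hg₁ rfl] using DFunLike.congr_fun h x₀
  · simpa [abs_of_nonneg (hg x).1] using (hg x).2
  · simpa using hg₀ hx

variable [MeasurableSpace G] {ν : Measure G} [BorelSpace G] [CompactSpace G] [IsFiniteMeasure ν]

lemma enorm_toL2 (P : C(G, ℂ)) : ‖toL2 ν P‖ₑ = eLpNorm P 2 ν := by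
  rw [Lp.enorm_def]
  exact eLpNorm_congr_ae (ContinuousMap.coeFn_toLp ν P)

lemma enorm_toLp_sub_toL2 {u : G → ℂ} (hu : MemLp u 2 ν) (P : C(G, ℂ)) :
    ‖hu.toLp u - toL2 ν P‖ₑ = eLpNorm (u - ⇑P) 2 ν := by
  rw [Lp.enorm_def]
  exact eLpNorm_congr_ae ((Lp.coeFn_sub _ _).trans
    (hu.coeFn_toLp.sub (ContinuousMap.coeFn_toLp ν P)))

lemma eLpNorm_le_of_mul_norm_toL2_le {Ω : Set G} (hΩ : MeasurableSet Ω) {h : C(G, ℂ)}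
    (hle : ∀ x, ‖h x‖ ≤ 1) (hzero : ∀ x ∉ Ω, h x = 0) {c : ℝ} (hc : 0 < c) {P : C(G, ℂ)}
    (hP : c * ‖toL2 ν P‖ ≤ ‖toL2 ν (h * P)‖) :
    eLpNorm P 2 ν ≤ ENNReal.ofReal c⁻¹ * eLpNorm P 2 (ν.restrict Ω) :=
  calc eLpNorm P 2 ν = ENNReal.ofReal ‖toL2 ν P‖ := by rw [ofReal_norm, enorm_toL2]
    _ ≤ ENNReal.ofReal (c⁻¹ * ‖toL2 ν (h * P)‖) := by
        gcongr
        exact (le_inv_mul_iff₀ hc).2 hP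
    _ = ENNReal.ofReal c⁻¹ * eLpNorm (⇑h * ⇑P) 2 ν := by
        rw [ENNReal.ofReal_mul (by positivity), ofReal_norm, enorm_toL2, ContinuousMap.coe_mul]
    _ ≤ _ := by gcongr; exact eLpNorm_mul_le_eLpNorm_restrict hΩ hle hzero P

lemma inner_toL2_toLp (P : C(G, ℂ)) {u : G → ℂ} (hu : MemLp u 2 ν) :
    inner ℂ (toL2 ν P) (hu.toLp u) = ∫ x, u x * conj (P x) ∂ν := by
  rw [L2.inner_def]
  refine integral_congr_ae ?_
  filter_upwards [ContinuousMap.coeFn_toLp ν (p := 2) (𝕜 := ℂ) P, hu.coeFn_toLp] with x hP hux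
  rw [hP, hux, RCLike.inner_apply]

namespace IsCharacterSystem

variable [AddCommGroup G] {K : Type*} [AddCommGroup K] {e : K → C(G, ℂ)}
  (he : IsCharacterSystem e)

include he

variable [IsTopologicalAddGroup G] [ν.IsAddLeftInvariant] [ν.IsOpenPosMeasure]

lemma exists_hilbertBasis [ν.WeaklyRegular] :
    ∃ (b : HilbertBasis K ℂ (Lp ℂ 2 ν)) (s : ℂ), s ≠ 0 ∧ ∀ k, b k = s • toL2 ν (e k) := by
  have := he.t2Space
  have hpos : 0 < ν.real Set.univ :=
    ENNReal.toReal_pos (isOpen_univ.measure_ne_zero ν ⟨0, trivial⟩) (measure_ne_top _ _)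
  let s : ℂ := ((√(ν.real Set.univ))⁻¹ : ℝ)
  have hs : s ≠ 0 := Complex.ofReal_ne_zero.2 (by positivity)
  have hortho : Orthonormal ℂ fun k ↦ s • toL2 ν (e k) := by
    classical
    refine orthonormal_iff_ite.2 fun k l ↦ ?_
    rw [inner_smul_left, inner_smul_right]
    split_ifs with hkl
    · rw [hkl, he.inner_toL2_self, ← mul_assoc, Complex.conj_ofReal, ← Complex.ofReal_mul,
        ← mul_inv, Real.mul_self_sqrt hpos.le, ← Complex.ofReal_mul, inv_mul_cancel₀ hpos.ne',
        Complex.ofReal_one]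
    · rw [he.inner_toL2_of_ne hkl, mul_zero, mul_zero]
  have hdense : ⊤ ≤ (Submodule.span ℂ (Set.range fun k ↦ s • toL2 ν (e k))).topologicalClosure := by
    have htoL2 : DenseRange (toL2 ν) := ContinuousMap.toLp_denseRange ℂ ν ℂ (by simp)
    rw [← htoL2.topologicalClosure_map_submodule he.topologicalClosure_span_range]
    refine Submodule.topologicalClosure_mono (Submodule.map_span_le _ _ _ |>.2 ?_)
    rintro _ ⟨k, rfl⟩
    have hmem : s • toL2 ν (e k) ∈ Submodule.span ℂ (Set.range fun k ↦ s • toL2 ν (e k)) :=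
      Submodule.subset_span ⟨k, rfl⟩
    exact (Submodule.smul_mem_iff _ hs).1 hmem
  exact ⟨.mk hortho hdense, s, hs, fun k ↦ by rw [HilbertBasis.coe_mk]⟩

lemma exists_trigPoly_eLpNorm_sub_le [ν.WeaklyRegular] (N : Finset K) {u f : G → ℂ}
    (hu : MemLp u 2 ν) (hf : MemLp f 2 ν)
    (huf : ∀ k ∉ N, ‖∫ x, u x * conj (e k x) ∂ν‖ ≤ ‖∫ x, f x * conj (e k x) ∂ν‖) :
    ∃ P ∈ trigPoly e N, eLpNorm (u - ⇑P) 2 ν ≤ eLpNorm f 2 ν := by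
  obtain ⟨b, s, hs, hb⟩ := he.exists_hilbertBasis (ν := ν)
  have hcoeff {v : G → ℂ} (hv : MemLp v 2 ν) (k : K) :
      ‖inner ℂ (b k) (hv.toLp v)‖ = ‖s‖ * ‖∫ x, v x * conj (e k x) ∂ν‖ := by
    rw [hb, inner_smul_left, inner_toL2_toLp, norm_mul, RCLike.norm_conj]
  refine ⟨∑ k ∈ N, (inner ℂ (b k) (hu.toLp u) * s) • e k, mem_trigPoly_finset_iff.2 ⟨_, rfl⟩, ?_⟩
  have hle := norm_sub_sum_hilbertBasis_le b N (x := hu.toLp u) (y := hf.toLp f) fun k hk ↦ by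
    rw [hcoeff, hcoeff]
    gcongr
    exact huf k hk
  have hsum : toL2 ν (∑ k ∈ N, (inner ℂ (b k) (hu.toLp u) * s) • e k) =
      ∑ k ∈ N, inner ℂ (b k) (hu.toLp u) • b k := by
    rw [map_sum]
    exact Finset.sum_congr rfl fun k _ ↦ by rw [map_smul, mul_smul, hb]
  rw [← hsum] at hle
  rw [← enorm_toLp_sub_toL2 hu, ← Lp.enorm_toLp hf]
  exact enorm_le_iff_norm_le.2 hle

theorem exists_eLpNorm_le [ConnectedSpace G] [ν.WeaklyRegular] {V : Type*} [NormedAddCommGroup V]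
    [InnerProductSpace ℝ V] [FiniteDimensional ℝ V] {φ : K →+ V}
    (hφ : ∀ R, {k | ‖φ k‖ ≤ R}.Finite) {Ω : Set G} (hΩ : IsOpen Ω) (hne : Ω.Nonempty) :
    ∃ C > 0, ∀ (z : V) (lam : ℂ) (u f : G → ℂ), MemLp u 2 ν → MemLp f 2 ν →
      (∀ k, ∫ x, f x * conj (e k x) ∂ν =
        (-((‖φ k - z‖ ^ 2 : ℝ) : ℂ) - lam) * ∫ x, u x * conj (e k x) ∂ν) →
      eLpNorm u 2 ν ≤ ENNReal.ofReal C * (eLpNorm f 2 ν + eLpNorm u 2 (ν.restrict Ω)) := by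
  have := he.t2Space
  obtain ⟨h, hh, hle, hzero⟩ := exists_continuousMap_ne_zero_of_isOpen hΩ hne
  obtain ⟨c, hc, hlower⟩ := he.exists_mul_norm_toL2_le_of_finrank_lt (ν := ν) hφ hh 1
    (finrank ℝ V + 1)
  refine ⟨1 + c⁻¹, by positivity, fun z lam u f hu hf huf ↦ ?_⟩
  obtain ⟨N, hN⟩ := (finite_preimage_sphericalShell hφ z (-lam.re) 1).exists_finset
  obtain ⟨P, hP, huP⟩ := he.exists_trigPoly_eLpNorm_sub_le N hu hf fun k hk ↦ by
    rw [huf, norm_mul]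
    refine le_mul_of_one_le_left (norm_nonneg _) ?_
    have hk' : 1 < |‖φ k - z‖ ^ 2 - -lam.re| := not_le.1 fun h ↦ hk ((hN k).2 h)
    calc (1 : ℝ) ≤ |(-((‖φ k - z‖ ^ 2 : ℝ) : ℂ) - lam).re| := by
          rw [Complex.sub_re, Complex.neg_re, Complex.ofReal_re, ← abs_neg, neg_sub, sub_neg_eq_add,
            add_comm, ← sub_neg_eq_add]
          exact hk'.le
      _ ≤ _ := Complex.abs_re_le_norm _
  have hshell : φ '' N ⊆ sphericalShell z (-lam.re) 1 := by
    rintro _ ⟨k, hk, rfl⟩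
    exact (hN k).1 hk
  have hPΩ := eLpNorm_le_of_mul_norm_toL2_le hΩ.measurableSet hle hzero hc
    (hlower z _ N hshell (Nat.lt_succ_of_le (Submodule.finrank_le _)) P hP)
  rw [ENNReal.ofReal_add one_pos.le (by positivity), ENNReal.ofReal_one]
  exact eLpNorm_le_of_eLpNorm_le_restrict one_le_two hu.1 P.continuous.aestronglyMeasurable hPΩ huP

end IsCharacterSystem

end Resolvent

section Torus

lemma isCharacterSystem_fourier {T : ℝ} [hT : Fact (0 < T)] :
    IsCharacterSystem fun k : ℤ ↦ (fourier k : C(AddCircle T, ℂ)) where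
  map_zero := by ext x; simp
  map_add k l := by ext x; simp
  map_neg k := by ext x; simp
  apply_add k x y := by simp [fourier_apply, AddCircle.toCircle_add]
  exists_apply_ne_one {k} hk := by
    refine ⟨(T / 2 / k : ℝ), ?_⟩
    have hneg : fourier k ((T / 2 / k : ℝ) : AddCircle T) = -1 := by
      simpa using fourier_add_half_inv_index hk hT.out 0
    norm_num [hneg]
  exists_apply_ne {x y} hxy :=
    ⟨1, fun h ↦ hxy (AddCircle.injective_toCircle hT.out.ne' (Circle.ext (by simpa using h)))⟩

namespace IsCharacterSystem

lemma prod {K L G H : Type*} [AddCommGroup K] [AddCommGroup L] [TopologicalSpace G]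
    [AddCommGroup G] [TopologicalSpace H] [AddCommGroup H] {e : K → C(G, ℂ)} {f : L → C(H, ℂ)}
    (he : IsCharacterSystem e) (hf : IsCharacterSystem f) :
    IsCharacterSystem fun k : K × L ↦
      (e k.1).comp (.fst : C(G × H, G)) * (f k.2).comp (.snd : C(G × H, H)) where
  map_zero := by ext x; simp [he.map_zero, hf.map_zero]
  map_add k l := by ext x; simp [he.map_add, hf.map_add, mul_mul_mul_comm]
  map_neg k := by ext x; simp [he.map_neg, hf.map_neg]
  apply_add k x y := by simp [he.apply_add, hf.apply_add, mul_mul_mul_comm]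
  exists_apply_ne_one {k} hk := by
    rcases k with ⟨k, l⟩
    by_cases hk₀ : k = 0
    · obtain ⟨y, hy⟩ := hf.exists_apply_ne_one (k := l) fun hl ↦ hk (Prod.ext hk₀ hl)
      exact ⟨(0, y), by simpa [hk₀, he.map_zero] using hy⟩
    · obtain ⟨x, hx⟩ := he.exists_apply_ne_one hk₀
      exact ⟨(x, 0), by simpa [hf.apply_zero] using hx⟩
  exists_apply_ne {x y} hxy := by
    by_cases hfst : x.1 = y.1
    · obtain ⟨l, hl⟩ := hf.exists_apply_ne fun hsnd ↦ hxy (Prod.ext hfst hsnd)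
      exact ⟨(0, l), by simpa [he.map_zero] using hl⟩
    · obtain ⟨k, hk⟩ := he.exists_apply_ne hfst
      exact ⟨(k, 0), by simpa [hf.map_zero] using hk⟩

lemma pi {ι : Type*} [Fintype ι] {K G : ι → Type*} [∀ i, AddCommGroup (K i)]
    [∀ i, TopologicalSpace (G i)] [∀ i, AddCommGroup (G i)] {e : ∀ i, K i → C(G i, ℂ)}
    (he : ∀ i, IsCharacterSystem (e i)) :
    IsCharacterSystem fun k : ∀ i, K i ↦ ∏ i, (e i (k i)).comp (.eval i : C(∀ i, G i, G i)) where
  map_zero := by ext x; simp [(he _).map_zero]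
  map_add k l := by ext x; simp [(he _).map_add, Finset.prod_mul_distrib]
  map_neg k := by ext x; simp [(he _).map_neg]
  apply_add k x y := by simp [(he _).apply_add, Finset.prod_mul_distrib]
  exists_apply_ne_one {k} hk := by
    classical
    obtain ⟨i, hi⟩ := Function.ne_iff.1 hk
    obtain ⟨x, hx⟩ := (he i).exists_apply_ne_one hi
    refine ⟨Pi.single i x, ?_⟩
    rw [ContinuousMap.prod_apply, Finset.prod_eq_single i] <;>
      simp +contextual [(he _).apply_zero, hx]
  exists_apply_ne {x y} hxy := by
    classical
    obtain ⟨i, hi⟩ := Function.ne_iff.1 hxy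
    obtain ⟨k, hk⟩ := (he i).exists_apply_ne hi
    refine ⟨Pi.single i k, ?_⟩
    have hsingle (z : ∀ i, G i) :
        (∏ j, (e j (Pi.single i k j)).comp (.eval j : C(∀ i, G i, G j))) z = e i k (z i) := by
      rw [ContinuousMap.prod_apply, Finset.prod_eq_single i] <;>
        simp +contextual [(he _).map_zero]
    rwa [hsingle, hsingle]

end IsCharacterSystem

instance isAddLeftInvariant_volume_torus_prod (n m : ℕ) :
    (volume : Measure (Torus n × Torus m)).IsAddLeftInvariant :=
  Measure.prod.instIsAddLeftInvariant

lemma exists_isCharacterSystem_torFT (n m : ℕ) :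
    ∃ e : (Fin n → ℤ) × (Fin m → ℤ) → C(Torus n × Torus m, ℂ), IsCharacterSystem e ∧
      ∀ u k l, torFT u k l = ∫ z, u z * starRingEnd ℂ (e (k, l) z) :=
  ⟨_, (IsCharacterSystem.pi fun _ ↦ isCharacterSystem_fourier).prod
    (.pi fun _ ↦ isCharacterSystem_fourier), fun u k l ↦ by simp [torFT]⟩

/-- The frequency lattice `ℤⁿ × ℤᵐ` embedded in Euclidean space of dimension `n + m`, where the
symbol of the twisted Laplacian becomes a squared distance. -/
def frequencyEmbedding (n m : ℕ) :
    (Fin n → ℤ) × (Fin m → ℤ) →+ EuclideanSpace ℝ (Fin n ⊕ Fin m) where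
  toFun k := WithLp.toLp 2 (Sum.elim (fun i ↦ (k.1 i : ℝ)) fun j ↦ (k.2 j : ℝ))
  map_zero' := by ext (i | j) <;> simp
  map_add' k l := by ext (i | j) <;> simp

lemma sq_norm_frequencyEmbedding_sub {n m : ℕ} (α : Fin n → ℝ) (k : Fin n → ℤ) (l : Fin m → ℤ) :
    ‖frequencyEmbedding n m (k, l) - WithLp.toLp 2 (Sum.elim α 0)‖ ^ 2 = twSymb α k l := by
  simp [EuclideanSpace.norm_sq_eq, frequencyEmbedding, twSymb]

lemma finite_norm_frequencyEmbedding_le (n m : ℕ) (R : ℝ) :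
    {k | ‖frequencyEmbedding n m k‖ ≤ R}.Finite := by
  refine (((Set.finite_Icc (fun _ : Fin n ↦ -⌈R⌉) fun _ ↦ ⌈R⌉).prod
    (Set.finite_Icc (fun _ : Fin m ↦ -⌈R⌉) fun _ ↦ ⌈R⌉))).subset
      fun k (hk : ‖frequencyEmbedding n m k‖ ≤ R) ↦ ?_
  have hcoord {z : ℤ} (hz : |(z : ℝ)| ≤ ‖frequencyEmbedding n m k‖) : |z| ≤ ⌈R⌉ := by
    exact_mod_cast (hz.trans hk).trans (Int.le_ceil R)
  have hfst (i : Fin n) :=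
    abs_le.1 (hcoord (PiLp.norm_apply_le (frequencyEmbedding n m k) (.inl i)))
  have hsnd (j : Fin m) :=
    abs_le.1 (hcoord (PiLp.norm_apply_le (frequencyEmbedding n m k) (.inr j)))
  exact ⟨⟨fun i ↦ (hfst i).1, fun i ↦ (hfst i).2⟩, fun j ↦ (hsnd j).1, fun j ↦ (hsnd j).2⟩

lemma L2sq_rpow_half_eq_eLpNorm {X : Type*} [MeasureSpace X] (A : Set X) (f : X → ℂ) :
    L2sq A f ^ (1 / 2 : ℝ) = eLpNorm f 2 (volume.restrict A) := by
  rw [eLpNorm_eq_lintegral_rpow_enorm_toReal (by simp) (by simp), L2sq]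
  simp [enorm_eq_nnnorm]

end Torus

theorem twisted_resolvent_estimate_general (n m : ℕ) {Ω : Set (Torus n × Torus m)}
    (hΩ : IsOpen Ω) (hne : Ω.Nonempty) :
    ∃ C : ℝ, 0 < C ∧ ∀ (α : Fin n → ℝ) (lam : ℂ) (u f : Torus n × Torus m → ℂ),
      MemLp u 2 volume → MemLp f 2 volume →
      (∀ k l, torFT f k l = (-(twSymb α k l : ℂ) - lam) * torFT u k l) →
      L2sq Set.univ u ^ (1 / 2 : ℝ) ≤
        ENNReal.ofReal C * (L2sq Set.univ f ^ (1 / 2 : ℝ) + L2sq Ω u ^ (1 / 2 : ℝ)) := by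
  obtain ⟨e, he, htorFT⟩ := exists_isCharacterSystem_torFT n m
  obtain ⟨C, hC, hest⟩ := he.exists_eLpNorm_le (ν := volume)
    (finite_norm_frequencyEmbedding_le n m) hΩ hne
  refine ⟨C, hC, fun α lam u f hu hf huf ↦ ?_⟩
  simp only [L2sq_rpow_half_eq_eLpNorm, Measure.restrict_univ]
  refine hest (WithLp.toLp 2 (Sum.elim α 0)) lam u f hu hf fun ⟨k, l⟩ ↦ ?_
  rw [sq_norm_frequencyEmbedding_sub, ← htorFT, ← htorFT, huf]

/-- **Uniform resolvent estimate for the partially twisted Laplacian** (Proposition 2.7).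
Let `n, m ≥ 1` and `Ω = Ω₀×Ω₂ ⊂ 𝕋^n×𝕋^m` with `Ω₀, Ω₂` nonempty open.  There is
`C > 0`, independent of `α` and `λ`, such that for every `α ∈ [0,1)^n`, every `λ ∈ ℝ`
and all `u, f ∈ L²(𝕋^n×𝕋^m)` with `u` in the domain `H²` of `H_α` and
`(H_α - λ)u = f` (expressed on the Fourier side as
`(f)^(k,l) = (-(|k-α|²+|l|²) - λ) (u)^(k,l)`):
`‖u‖_{L²(𝕋^n×𝕋^m)} ≤ C (‖f‖_{L²(𝕋^n×𝕋^m)} + ‖u‖_{L²(Ω)})`. -/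
theorem twisted_resolvent_estimate (n m : ℕ) (hn : 1 ≤ n) (hm : 1 ≤ m)
    (Ω₀ : Set (Torus n)) (Ω₂ : Set (Torus m))
    (h₀ : Ω₀.Nonempty) (h₀' : IsOpen Ω₀) (h₂ : Ω₂.Nonempty) (h₂' : IsOpen Ω₂) :
    ∃ C : ℝ, 0 < C ∧
      ∀ (α : Fin n → ℝ), α ∈ cube01 n →
        ∀ (lam : ℝ) (u f : Torus n × Torus m → ℂ),
          MemLp u 2 (volume : Measure (Torus n × Torus m)) →
          MemLp f 2 (volume : Measure (Torus n × Torus m)) →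
          -- `u` lies in the domain `H²(𝕋^n×𝕋^m)` of `H_α`
          (∑' p : (Fin n → ℤ) × (Fin m → ℤ),
              ENNReal.ofReal ((1 + twSymb α p.1 p.2) ^ 2) * (‖torFT u p.1 p.2‖₊ : ℝ≥0∞) ^ 2) < ⊤ →
          -- `(H_α - λ) u = f`
          (∀ (k : Fin n → ℤ) (l : Fin m → ℤ),
            torFT f k l = (-(twSymb α k l : ℂ) - (lam : ℂ)) * torFT u k l) →
          L2sq (Set.univ : Set (Torus n × Torus m)) u ^ (1/2 : ℝ) ≤
            ENNReal.ofReal C *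
              (L2sq (Set.univ : Set (Torus n × Torus m)) f ^ (1/2 : ℝ) +
                L2sq (Ω₀ ×ˢ Ω₂) u ^ (1/2 : ℝ)) := by
  obtain ⟨C, hC, hest⟩ := twisted_resolvent_estimate_general n m (h₀'.prod h₂') (h₀.prod h₂)
  exact ⟨C, hC, fun α _ lam u f hu hf _ huf ↦ hest α lam u f hu hf huf⟩
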